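/- Let μ be a measure on ℝ which is finite on bounded intervals, with ⟨g,h⟩ := ∫ g h dμ and ‖g‖ := ⟨g,g⟩^{1/2}. Let G_o := {g ∈ G_↑ : g(0) ≥ 1} and G_A := {g ∈ G_↑ ∩ H_{1,1} : g(0) ≤ 0}, and define G_A(x) := x, G_o(x) := 1 for x ∈ [0,1] and G_o(x) := x otherwise, so that ψ := G_o − G_A = 1{x ∈ [0,1]}(1−x). Then: (i) ‖G_o − G_A‖ = inf{‖g_o − g_A‖ : g_o ∈ G_o, g_A ∈ G_A}; (ii) ⟨1,ψ⟩ ≥ ‖ψ‖²; (iii) ⟨g,ψ⟩ ≥ g(0) ⟨1,ψ⟩ for every nondecreasing g : ℝ → [−∞,∞] with ∫_{[0,1]}|g| dμ < ∞; (iv) ⟨g,ψ⟩ ≤ ⟨1,ψ⟩ − ‖ψ‖² for every g ∈ H_{1,1} with g(0) ≤ 0 and ∫_{[0,1]}|g| dμ < ∞. -/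

import Mathlib

/-!
Everything follows from pointwise comparisons on `[0,1]`, outside of which `ψ` vanishes.
If `g_o` is nondecreasing with `g_o(0) ≥ 1` and `g_A` is 1-Lipschitz with `g_A(0) ≤ 0`, then for
`x ∈ [0,1]` we have `g_o(x) ≥ 1` and `g_A(x) ≤ x`, so `|g_A(x) - g_o(x)| ≥ 1 - x = ψ(x)`
(`abs_psi_le`); integrating gives (i), since `(G_o, G_A)` is itself feasible.
For (ii), `0 ≤ ψ ≤ 1`. For (iii), `g(x) ≥ g(0)` on `[0,1]` is integrated against `ψ ≥ 0`; an
infinite `g(0)` is either `⊥`, where the bound is trivial unless `⟨1,ψ⟩ = 0`, or `⊤`, which forces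
`μ [0,1] = 0`. For (iv), `g(x) ≤ x` on `[0,1]` gives `g ψ ≤ x ψ = ψ - ψ²`.
-/

open MeasureTheory Set
open scoped ENNReal

/-- `G_A(x) = x`. -/
noncomputable def GAiso (x : ℝ) : ℝ := x

/-- `G_o = 1` on `[0,1]`, `G_o(x) = x` otherwise. -/
noncomputable def GOiso (x : ℝ) : ℝ := if x ∈ Icc (0 : ℝ) 1 then 1 else x

/-- `ψ = G_o - G_A = 1_{[0,1]}(1-x)`. -/
noncomputable def psiIso (x : ℝ) : ℝ := GOiso x - GAiso x

/-- squared `L²(μ)`-distance, in `ℝ≥0∞`, between an extended-real-valued and a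
real-valued function. -/
noncomputable def eDist2 (μ : Measure ℝ) (go : ℝ → EReal) (ga : ℝ → ℝ) : ℝ≥0∞ :=
  ∫⁻ x, (((ga x : EReal) - go x).abs) ^ (2 : ℕ) ∂μ

lemma psiIso_of_mem {x : ℝ} (hx : x ∈ Icc (0 : ℝ) 1) : psiIso x = 1 - x := by
  simp only [psiIso, GOiso, GAiso, if_pos hx]

lemma psiIso_of_notMem {x : ℝ} (hx : x ∉ Icc (0 : ℝ) 1) : psiIso x = 0 := by
  simp only [psiIso, GOiso, GAiso, if_neg hx, sub_self]

lemma psiIso_nonneg (x : ℝ) : 0 ≤ psiIso x := by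
  by_cases hx : x ∈ Icc (0 : ℝ) 1
  · rw [psiIso_of_mem hx]; linarith [hx.2]
  · rw [psiIso_of_notMem hx]

lemma psiIso_le_one (x : ℝ) : psiIso x ≤ 1 := by
  by_cases hx : x ∈ Icc (0 : ℝ) 1
  · rw [psiIso_of_mem hx]; linarith [hx.1]
  · rw [psiIso_of_notMem hx]; exact zero_le_one

lemma measurable_psiIso : Measurable psiIso := by
  unfold psiIso GOiso GAiso
  exact (Measurable.ite measurableSet_Icc measurable_const measurable_id).sub measurable_id

/-- Since `ψ` is bounded and vanishes off `[0,1]`, integrability of `f` on `[0,1]` suffices for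
`f ψ` to be integrable on all of `ℝ`. -/
lemma integrable_mul_psiIso {μ : Measure ℝ} {f : ℝ → ℝ} (hf : IntegrableOn f (Icc (0 : ℝ) 1) μ) :
    Integrable (fun x => f x * psiIso x) μ := by
  have h : IntegrableOn (fun x => f x * psiIso x) (Icc (0 : ℝ) 1) μ := by
    refine Integrable.mul_bdd (c := 1) hf measurable_psiIso.aestronglyMeasurable
      (Filter.Eventually.of_forall fun x => ?_)
    rw [Real.norm_of_nonneg (psiIso_nonneg x)]
    exact psiIso_le_one x
  exact h.integrable_of_forall_notMem_eq_zero fun x hx => by rw [psiIso_of_notMem hx, mul_zero]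

lemma le_self_of_lipschitz {g : ℝ → ℝ} (hg : ∀ x y : ℝ, |g x - g y| ≤ |x - y|) (h0 : g 0 ≤ 0)
    {x : ℝ} (hx : 0 ≤ x) : g x ≤ x := by
  have h := (le_abs_self _).trans (hg x 0)
  rw [sub_zero, abs_of_nonneg hx] at h
  linarith

/-- For a feasible pair, the pointwise distance is at least the one of `(G_o, G_A)`. -/
lemma abs_psi_le {go : ℝ → EReal} {ga : ℝ → ℝ} (hgo : Monotone go) (hgo0 : ((1 : ℝ) : EReal) ≤ go 0)
    (hga : ∀ x y : ℝ, |ga x - ga y| ≤ |x - y|) (hga0 : ga 0 ≤ 0) (x : ℝ) :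
    ((GAiso x : EReal) - (GOiso x : EReal)).abs ≤ ((ga x : EReal) - go x).abs := by
  have hL : ((GAiso x : EReal) - (GOiso x : EReal)).abs = ENNReal.ofReal (psiIso x) := by
    rw [← EReal.coe_sub, EReal.abs_def, abs_sub_comm]
    change ENNReal.ofReal |psiIso x| = _
    rw [abs_of_nonneg (psiIso_nonneg x)]
  rw [hL]
  by_cases hx : x ∈ Icc (0 : ℝ) 1
  · have h1 : ((1 : ℝ) : EReal) ≤ go x := hgo0.trans (hgo hx.1)
    have h2 := le_self_of_lipschitz hga hga0 hx.1
    rw [psiIso_of_mem hx]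
    generalize go x = y at h1
    induction y with
    | bot => exact absurd h1 (not_le.2 (EReal.bot_lt_coe 1))
    | top => simp
    | coe r =>
      rw [EReal.coe_le_coe_iff] at h1
      rw [← EReal.coe_sub, EReal.abs_def]
      refine ENNReal.ofReal_le_ofReal ?_
      rw [abs_sub_comm]
      exact le_trans (by linarith) (le_abs_self _)
  · rw [psiIso_of_notMem hx]; simp

lemma monotone_GOiso : Monotone GOiso := by
  intro x y hxy
  unfold GOiso
  simp only [mem_Icc]
  split_ifs <;> grind

/-- Theorem `OptimizationU`, isotonic case: with
`G_o := {g ∈ G_↑ : g(0) ≥ 1}` (extended-real-valued nondecreasing functions) and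
`G_A := {g ∈ G_↑ ∩ H_{1,1} : g(0) ≤ 0}`, the pair `(G_o, G_A)` above minimizes the
`L²(μ)`-distance, and `ψ := G_o - G_A` satisfies `⟨1,ψ⟩ ≥ ‖ψ‖²`, the one-sided
bias inequality (iii) and the upper bound (iv) on `H_{1,1}`. -/
theorem stmt14 (μ : Measure ℝ) (hμfin : ∀ p q : ℝ, μ (Icc p q) < ⊤) :
    -- (i) minimal L²(μ)-distance
    ((eDist2 μ (fun x => (GOiso x : EReal)) GAiso) ^ ((1:ℝ)/2) =
      ⨅ p : {q : (ℝ → EReal) × (ℝ → ℝ) //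
          Monotone q.1 ∧ ((1 : ℝ) : EReal) ≤ q.1 0 ∧
          Monotone q.2 ∧ (∀ x y : ℝ, |q.2 x - q.2 y| ≤ |x - y|) ∧ q.2 0 ≤ 0},
        (eDist2 μ p.1.1 p.1.2) ^ ((1:ℝ)/2)) ∧
    -- (ii) ⟨1,ψ⟩ ≥ ‖ψ‖²
    ((∫ x, (psiIso x)^2 ∂μ) ≤ ∫ x, psiIso x ∂μ) ∧
    -- (iii) ⟨g,ψ⟩ ≥ g(0)⟨1,ψ⟩ for nondecreasing (extended-real-valued) g
    (∀ g : ℝ → EReal, Monotone g → Measurable g →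
      (∀ᵐ x ∂μ.restrict (Icc (0 : ℝ) 1), g x ≠ ⊤ ∧ g x ≠ ⊥) →
      IntegrableOn (fun x => (g x).toReal) (Icc (0 : ℝ) 1) μ →
      g 0 * ((∫ x, psiIso x ∂μ : ℝ) : EReal) ≤
        ((∫ x, (g x).toReal * psiIso x ∂μ : ℝ) : EReal)) ∧
    -- (iv) ⟨g,ψ⟩ ≤ ⟨1,ψ⟩ - ‖ψ‖² for g ∈ H_{1,1} with g(0) ≤ 0
    (∀ g : ℝ → ℝ, (∀ x y : ℝ, |g x - g y| ≤ |x - y|) → g 0 ≤ 0 →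
      IntegrableOn g (Icc (0 : ℝ) 1) μ →
      ∫ x, g x * psiIso x ∂μ ≤ (∫ x, psiIso x ∂μ) - ∫ x, (psiIso x)^2 ∂μ) := by
  have hone : IntegrableOn (fun _ : ℝ => (1 : ℝ)) (Icc (0 : ℝ) 1) μ :=
    integrableOn_const (hμfin 0 1).ne
  have hpsi : Integrable psiIso μ := by simpa using integrable_mul_psiIso hone
  have hpsi2 : Integrable (fun x => psiIso x ^ 2) μ := by
    simpa [pow_two] using integrable_mul_psiIso hpsi.integrableOn
  refine ⟨le_antisymm ?_ ?_, ?_, ?_, ?_⟩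
  · refine le_iInf ?_
    rintro ⟨⟨go, ga⟩, hgo, hgo0, -, hga, hga0⟩
    refine ENNReal.rpow_le_rpow (lintegral_mono fun x => ?_) (by norm_num)
    exact pow_le_pow_left' (abs_psi_le hgo hgo0 hga hga0 x) 2
  · refine iInf_le_of_le ⟨⟨fun x => (GOiso x : EReal), GAiso⟩, ?_, ?_, ?_, ?_, ?_⟩ le_rfl
    · exact fun x y h => EReal.coe_le_coe_iff.2 (monotone_GOiso h)
    · simp [GOiso]
    · exact fun x y h => h
    · exact fun x y => le_rfl
    · exact le_rfl
  · exact integral_mono hpsi2 hpsi fun x =>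
      pow_le_of_le_one (psiIso_nonneg x) (psiIso_le_one x) two_ne_zero
  · intro g hg _ hfin hint
    rcases (integral_nonneg psiIso_nonneg : 0 ≤ ∫ x, psiIso x ∂μ).eq_or_lt with hc | hc
    · -- Here `ψ = 0` almost everywhere, so both sides vanish whatever `g 0` is.
      have hz : psiIso =ᵐ[μ] 0 := (integral_eq_zero_iff_of_nonneg psiIso_nonneg hpsi).1 hc.symm
      have hR : ∫ x, (g x).toReal * psiIso x ∂μ = 0 := by
        refine integral_eq_zero_of_ae ?_
        filter_upwards [hz] with x hx
        simp [hx]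
      rw [hR, ← hc]; simp
    · have hmono : ∀ x ∈ Icc (0 : ℝ) 1, g 0 ≤ g x := fun x hx => hg hx.1
      rw [ae_restrict_iff' measurableSet_Icc] at hfin
      generalize g 0 = y at hmono
      induction y with
      | bot => rw [EReal.bot_mul_coe_of_pos hc]; exact bot_le
      | top =>
        -- Now `g = ⊤` on `[0,1]`, so a.e. finiteness makes `[0,1]` null and `⟨1,ψ⟩ = 0`.
        exfalso
        refine hc.ne' (integral_eq_zero_of_ae ?_)
        filter_upwards [hfin] with x hx
        by_cases h : x ∈ Icc (0 : ℝ) 1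
        · exact absurd (top_le_iff.1 (hmono x h)) (hx h).1
        · exact psiIso_of_notMem h
      | coe r =>
        rw [← EReal.coe_mul, EReal.coe_le_coe_iff, ← integral_const_mul]
        refine integral_mono_ae (hpsi.const_mul r) (integrable_mul_psiIso hint) ?_
        filter_upwards [hfin] with x hx
        by_cases h : x ∈ Icc (0 : ℝ) 1
        · refine mul_le_mul_of_nonneg_right ?_ (psiIso_nonneg x)
          have := EReal.toReal_le_toReal (hmono x h) (EReal.coe_ne_bot r) (hx h).1
          rwa [EReal.toReal_coe] at this
        · simp [psiIso_of_notMem h]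
  · intro g hg h0 hint
    rw [← integral_sub hpsi hpsi2]
    refine integral_mono (integrable_mul_psiIso hint) (hpsi.sub hpsi2) fun x => ?_
    by_cases h : x ∈ Icc (0 : ℝ) 1
    · have h1 := mul_le_mul_of_nonneg_right (le_self_of_lipschitz hg h0 h.1) (psiIso_nonneg x)
      -- On `[0,1]`, `x ψ(x) = ψ(x) - ψ(x)²` because `x = 1 - ψ(x)`.
      have h2 : psiIso x - psiIso x ^ 2 = x * psiIso x := by rw [psiIso_of_mem h]; ring
      exact h1.trans_eq h2.symm
    · simp [psiIso_of_notMem h]
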